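/- Fix integers d ≥ 1, r ≥ 0 and a strict partition λ with d parts such that λ_i ≤ r + 2d − 2i + 1 for all i. Let F = (f_d)^{μ_d} ∘ (f_{d−1})^{μ_{d−1}} ∘ ⋯ ∘ (f_1)^{μ_1} be the composition in which, for i = 1, …, d in increasing order, the box-adding map f_i is applied μ_i successive times (each application adds one box at the end of row i of the current shape; at each step the hypothesis of the box-adding lemma holds, and the final shape is Z(d,r)). Then F is a well-defined bijection from BS(λ) onto BS(Z(d,r))|_λ. -/

import Mathlib

open scoped BigOperators

namespace BST

/-- `lam` (1-indexed, with `d` parts) is a strict partition: strictly decreasing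
positive parts `lam 1 > lam 2 > ⋯ > lam d > 0`. -/
def IsStrictPartition (d : ℕ) (lam : ℕ → ℕ) : Prop :=
  (∀ i : ℕ, 1 ≤ i → i < d → lam (i + 1) < lam i) ∧ 1 ≤ lam d

/-- The size `|λ| = λ_1 + ⋯ + λ_d`. -/
def sizeP (d : ℕ) (lam : ℕ → ℕ) : ℕ := ∑ i ∈ Finset.Icc 1 d, lam i

/-- The shifted diagram `D(λ) ⊆ ℤ × ℤ`: row `i` (1 ≤ i ≤ d) occupies columns
`i - d, …, λ_i + i - d - 1`. -/
def Diagram (d : ℕ) (lam : ℕ → ℕ) : Set (ℤ × ℤ) :=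
  {p : ℤ × ℤ | 1 ≤ p.1 ∧ p.1 ≤ (d : ℤ) ∧ p.1 - (d : ℤ) ≤ p.2 ∧
    p.2 + (d : ℤ) + 1 ≤ (lam p.1.toNat : ℤ) + p.1}

/-- The hook `H(i,c)`. -/
def Hook (d : ℕ) (lam : ℕ → ℕ) (i c : ℤ) : Set (ℤ × ℤ) :=
  {(i, c)} ∪ {p ∈ Diagram d lam | (p.1 = i ∧ c < p.2) ∨ (p.2 = c ∧ i < p.1)} ∪
    {p ∈ Diagram d lam | c < 0 ∧ p.1 = (d : ℤ) + 1 + c}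

/-- The extended hook `H̃(i,c)`. -/
def ExtHook (d : ℕ) (lam : ℕ → ℕ) (i c : ℤ) : Set (ℤ × ℤ) :=
  Hook d lam i c ∪ {p : ℤ × ℤ | c < 0 ∧ p = ((d : ℤ) + 1 + c, c)}

/-- The extended diagram `D(λ) ∪ {(i, i - d - 1) : 1 ≤ i ≤ d}`. -/
def ExtDiagram (d : ℕ) (lam : ℕ → ℕ) : Set (ℤ × ℤ) :=
  Diagram d lam ∪ {p : ℤ × ℤ | 1 ≤ p.1 ∧ p.1 ≤ (d : ℤ) ∧ p.2 = p.1 - ((d : ℤ) + 1)}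

/-- The extended filling `B̃`, with `B̃(i, i - d - 1) = B(i, 0)`. -/
def ExtFilling (d : ℕ) (B : ℤ × ℤ → ℕ) : ℤ × ℤ → ℕ :=
  fun p => if p.2 = p.1 - ((d : ℤ) + 1) then B (p.1, 0) else B p

/-- The rank function `rk(i,c)`. -/
def rk (d : ℕ) (lam : ℕ → ℕ) (i c : ℤ) : ℤ :=
  if 0 ≤ c then (lam i.toNat : ℤ) - d + i - c
  else (lam i.toNat : ℤ) - d + i + (lam ((d : ℤ) + 1 + c).toNat : ℤ) + c + 1

/-- A bijective filling of `D(λ)` with `1, …, |λ|` (normalized to be `0` off the diagram). -/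
def IsFilling (d : ℕ) (lam : ℕ → ℕ) (B : ℤ × ℤ → ℕ) : Prop :=
  Set.BijOn B (Diagram d lam) (Set.Icc 1 (sizeP d lam)) ∧
    ∀ p : ℤ × ℤ, p ∉ Diagram d lam → B p = 0

/-- A balanced shifted tableau: a bijective filling such that at each box `(i,c)`,
`B(i,c)` is the `rk(i,c)`-th largest entry of the multiset of values of `B̃` on the
extended hook, i.e. exactly `rk(i,c) - 1` boxes of the extended hook carry a value
strictly larger than `B(i,c)`. -/
def IsBalanced (d : ℕ) (lam : ℕ → ℕ) (B : ℤ × ℤ → ℕ) : Prop :=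
  IsFilling d lam B ∧ ∀ p ∈ Diagram d lam,
    ({q ∈ ExtHook d lam p.1 p.2 | B p < ExtFilling d B q}.ncard : ℤ) =
      rk d lam p.1 p.2 - 1

/-- A standard Young tableau of shifted shape `λ`. -/
def IsSYT (d : ℕ) (lam : ℕ → ℕ) (B : ℤ × ℤ → ℕ) : Prop :=
  IsFilling d lam B ∧ ∀ p ∈ Diagram d lam, ∀ q ∈ Diagram d lam,
    ((p.1 = q.1 ∧ p.2 < q.2) → B p < B q) ∧ ((p.2 = q.2 ∧ p.1 < q.1) → B p < B q)

/-- The simple reflections of `W(B_n)`, acting on `ℤ`: `s 0` swaps `1 ↔ -1`,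
and `s a` (for `a ≥ 1`) swaps `a ↔ a+1` and `-a ↔ -(a+1)`. -/
def sB (a : ℕ) : Equiv.Perm ℤ :=
  if a = 0 then Equiv.swap 1 (-1)
  else Equiv.swap (a : ℤ) ((a : ℤ) + 1) * Equiv.swap (-(a : ℤ)) (-(a : ℤ) - 1)

/-- The product `s_{a_1} s_{a_2} ⋯ s_{a_m}` of a word. -/
def wordProd (L : List ℕ) : Equiv.Perm ℤ := (L.map sB).prod

/-- A signed permutation in `W(B_n)`: odd, and the identity beyond `n`. -/
def IsSignedPerm (n : ℕ) (w : Equiv.Perm ℤ) : Prop :=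
  (∀ i : ℤ, w (-i) = -(w i)) ∧ ∀ i : ℤ, (n : ℤ) < |i| → w i = i

/-- The Coxeter length of `w` in `W(B_n)`. -/
noncomputable def lengthB (n : ℕ) (w : Equiv.Perm ℤ) : ℕ :=
  sInf {m : ℕ | ∃ L : List ℕ, (∀ a ∈ L, a < n) ∧ wordProd L = w ∧ L.length = m}

/-- `L` is a reduced word of `w` in `W(B_n)`. -/
def IsReducedWord (n : ℕ) (w : Equiv.Perm ℤ) (L : List ℕ) : Prop :=
  (∀ a ∈ L, a < n) ∧ wordProd L = w ∧ L.length = lengthB n w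

/-- The vector `e_k` (for `k ≥ 1` the `k`-th standard basis vector, with the
conventions `e 0 = 0` and `e (-k) = - e k`), represented as an odd function `ℤ → ℤ`. -/
def eVec (k : ℤ) : ℤ → ℤ :=
  fun t => if t = 0 then 0 else if t = k then 1 else if t = -k then -1 else 0

/-- The positive roots of type `B_n`. -/
def PosRoots (n : ℕ) : Set (ℤ → ℤ) :=
  {v | (∃ i j : ℤ, 1 ≤ i ∧ i < j ∧ j ≤ (n : ℤ) ∧
        (v = eVec j - eVec i ∨ v = eVec j + eVec i)) ∨
       (∃ i : ℤ, 1 ≤ i ∧ i ≤ (n : ℤ) ∧ v = eVec i)}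

/-- The action of a signed permutation on vectors: `w · e_i = e_{w(i)}`. -/
def actB (w : Equiv.Perm ℤ) (v : ℤ → ℤ) : ℤ → ℤ := fun t => v (w⁻¹ t)

/-- The inversion set `Inv(w) = {α ∈ Φ⁺ : w⁻¹ · α ∈ -Φ⁺}`. -/
def InvSet (n : ℕ) (w : Equiv.Perm ℤ) : Set (ℤ → ℤ) :=
  {α | α ∈ PosRoots n ∧ -(actB w⁻¹ α) ∈ PosRoots n}

/-- The simple roots: `α_0 = e_1` and `α_a = e_{a+1} - e_a` for `a ≥ 1`. -/
def alphaRoot (a : ℕ) : ℤ → ℤ :=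
  if a = 0 then eVec 1 else eVec ((a : ℤ) + 1) - eVec (a : ℤ)

/-- The reflection order of a word: `reflOrder L t = γ_{t+1} = s_{a_1} ⋯ s_{a_t} · α_{a_{t+1}}`
(0-indexed). -/
def reflOrder (L : List ℕ) (t : ℕ) : ℤ → ℤ :=
  actB (wordProd (L.take t)) (alphaRoot (L.getD t 0))

/-- The trapezoid `Z(d,r) = (r+2d-1, r+2d-3, …, r+1)`. -/
def Zlam (d r : ℕ) : ℕ → ℕ := fun i => r + 2 * d + 1 - 2 * i

/-- The labeling `f : D(Z(d,r)) → Φ⁺`. -/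
def fLabel (d r : ℕ) (p : ℤ × ℤ) : ℤ → ℤ :=
  if p.2 ≤ 0 then eVec ((d : ℤ) + 1 - p.1) - eVec p.2
  else if p.2 ≤ (r : ℤ) then eVec ((d : ℤ) + 1 - p.1) + eVec (p.2 + (d : ℤ))
  else eVec ((d : ℤ) + 1 - p.1) - eVec (p.2 - (r : ℤ))

/-- The extended labeling `f̃`, with `f̃(i, i - d - 1) = 2 e_{d+1-i}`. -/
def fExtLabel (d r : ℕ) (p : ℤ × ℤ) : ℤ → ℤ :=
  if p.2 = p.1 - ((d : ℤ) + 1) then (2 : ℤ) • eVec ((d : ℤ) + 1 - p.1)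
  else fLabel d r p

/-- `w` is the signed permutation `w^{(d,r)} ∈ W(B_{d+r})`, i.e.
`w(i) = d + i` for `1 ≤ i ≤ r` and `w(i) = -(i - r)` for `r < i ≤ d + r`. -/
def IsWdr (d r : ℕ) (w : Equiv.Perm ℤ) : Prop :=
  IsSignedPerm (d + r) w ∧
    (∀ i : ℤ, 1 ≤ i → i ≤ (r : ℤ) → w i = (d : ℤ) + i) ∧
    (∀ i : ℤ, (r : ℤ) < i → i ≤ (d : ℤ) + (r : ℤ) → w i = -(i - r))


/-- `x` lies strictly between `y` and `z` (i.e. `min(y,z) < x < max(y,z)`). -/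
def Between (x y z : ℕ) : Prop := (y < x ∧ x < z) ∨ (z < x ∧ x < y)

/-- A nonempty list is unimodal: strictly decreasing down to its minimum
(at 0-indexed position `k`), then strictly increasing. -/
def Unimodal (L : List ℕ) : Prop :=
  ∃ k : ℕ, k < L.length ∧
    (∀ a b : ℕ, a < b → b ≤ k → L.getD b 0 < L.getD a 0) ∧
    (∀ a b : ℕ, k ≤ a → a < b → b < L.length → L.getD a 0 < L.getD b 0)

/-- Row `i` of the distinguished tableau of shape `Z(d,r)`:
`(r+d-i, …, r+1, 0, 1, …, r+d-i)`. -/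
def rowWord (d r i : ℕ) : List ℕ :=
  (List.range (r + 2 * (d - i) + 1)).map fun t =>
    if t < d - i then r + (d - i) - t else t - (d - i)

/-- The reading word `π(T) = T_d T_{d-1} ⋯ T_1` of the distinguished tableau of
shape `Z(d,r)`. -/
def piWord (d r : ℕ) : List ℕ :=
  (List.range d).flatMap fun k => rowWord d r (d - k)

/-- `μ_i = Z(d,r)_i - λ_i`. -/
def muF (d r : ℕ) (lam : ℕ → ℕ) (i : ℕ) : ℕ := r + 2 * d + 1 - 2 * i - lam i

/-- `σ_i = μ_1 + ⋯ + μ_i`. -/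
def sigmaF (d r : ℕ) (lam : ℕ → ℕ) (i : ℕ) : ℕ := ∑ t ∈ Finset.Icc 1 i, muF d r lam t

/-- `ν_i = min{μ_i, …, μ_d}`. -/
noncomputable def nuF (d r : ℕ) (lam : ℕ → ℕ) (i : ℕ) : ℕ :=
  sInf {m : ℕ | ∃ j : ℕ, i ≤ j ∧ j ≤ d ∧ m = muF d r lam j}

/-- The word `a^λ`: the concatenation over `i = 1, …, d` of the increasing runs
`(d+r-i-μ_i+1, …, d+r-i)`. -/
def aLamWord (d r : ℕ) (lam : ℕ → ℕ) : List ℕ :=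
  (List.range d).flatMap fun k =>
    (List.range (muF d r lam (k + 1))).map fun t =>
      d + r - (k + 1) - muF d r lam (k + 1) + 1 + t

/-- Row `i` of the tableau `P(w^λ)`: entries `P(i,c) = c` for `c ≥ 0` and
`P(i,c) = r - c - ν_{d+1+c}` for `c < 0`. -/
noncomputable def rowWordP (d r : ℕ) (lam : ℕ → ℕ) (i : ℕ) : List ℕ :=
  (List.range (lam i)).map fun t =>
    if t < d - i then r + (d - i) - t - nuF d r lam (i + 1 + t) else t - (d - i)

/-- The reading word `π(P(w^λ))`. -/
noncomputable def piWordP (d r : ℕ) (lam : ℕ → ℕ) : List ℕ :=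
  (List.range d).flatMap fun k => rowWordP d r lam (d - k)

/-- The shape obtained from `λ` by adding one box at the end of row `i`. -/
def stepShape (lam : ℕ → ℕ) (i : ℕ) : ℕ → ℕ :=
  fun t => if t = i then lam i + 1 else lam t

/-- The box-adding map `f_i` on fillings: swap columns `j = λ_i + i - d` and `j + 1`
(in rows `1, …, i-1`), and put the value `N + 1` in the new box `(i, j)`. -/
def addBox (d : ℕ) (lam : ℕ → ℕ) (i : ℕ) (N : ℕ) (B : ℤ × ℤ → ℕ) : ℤ × ℤ → ℕ :=
  fun p =>
    if p = ((i : ℤ), (lam i : ℤ) + (i : ℤ) - (d : ℤ)) then N + 1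
    else if 1 ≤ p.1 ∧ p.1 < (i : ℤ) ∧ p.2 = (lam i : ℤ) + (i : ℤ) - (d : ℤ) then
      B (p.1, p.2 + 1)
    else if 1 ≤ p.1 ∧ p.1 < (i : ℤ) ∧ p.2 = (lam i : ℤ) + (i : ℤ) - (d : ℤ) + 1 then
      B (p.1, p.2 - 1)
    else B p

/-- Successively apply the box-adding maps along a list of row indices,
tracking the current shape. -/
def FmapAux (d : ℕ) : List ℕ → (ℕ → ℕ) → (ℤ × ℤ → ℕ) → (ℤ × ℤ → ℕ)
  | [], _, B => B
  | i :: rest, lam, B => FmapAux d rest (stepShape lam i) (addBox d lam i (sizeP d lam) B)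

/-- The shape after successively adding boxes along a list of row indices. -/
def shapeAux : List ℕ → (ℕ → ℕ) → (ℕ → ℕ)
  | [], lam => lam
  | i :: rest, lam => shapeAux rest (stepShape lam i)

/-- The list of row indices `1^{μ_1} 2^{μ_2} ⋯ d^{μ_d}` used to pad `λ` to `Z(d,r)`. -/
def rowsList (d r : ℕ) (lam : ℕ → ℕ) : List ℕ :=
  (List.range d).flatMap fun k => List.replicate (muF d r lam (k + 1)) (k + 1)

/-- `BS(Z(d,r))|_λ`: balanced tableaux of shape `Z(d,r)` such that for each
`i ∈ {1,…,d}` the entries `N + σ_{i-1} + 1, …, N + σ_i` all occur in row `i`. -/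
def BSRestricted (d r : ℕ) (lam : ℕ → ℕ) : Set (ℤ × ℤ → ℕ) :=
  {T | IsBalanced d (Zlam d r) T ∧ ∀ i : ℕ, 1 ≤ i → i ≤ d →
    ∀ k : ℕ, sizeP d lam + sigmaF d r lam (i - 1) + 1 ≤ k →
      k ≤ sizeP d lam + sigmaF d r lam i →
      ∃ c : ℤ, ((i : ℤ), c) ∈ Diagram d (Zlam d r) ∧ T ((i : ℤ), c) = k}

/-- `w ∈ W(B_n)` pattern embeds the signed pattern `v` (given as its one-line
notation, a list of nonzero integers). -/
def PatternEmbeds (n : ℕ) (w : Equiv.Perm ℤ) (v : List ℤ) : Prop :=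
  ∃ idx : Fin v.length → ℤ, StrictMono idx ∧
    (∀ j, 1 ≤ idx j ∧ idx j ≤ (n : ℤ)) ∧
    (∀ j, 0 < w (idx j) ↔ 0 < v.get j) ∧
    (∀ j k, |w (idx j)| < |w (idx k)| ↔ |v.get j| < |v.get k|)

/-!
Adding a box at the end of row `i` opens column `j`, and the box-adding map exchanges the entries
of columns `j` and `j + 1` above it. Up to this exchange the extended hook of `(a, j + 1)` is the
one of `(a, j)` with the box `(a, j + 1)` removed, so the number of entries exceeding that of a
given box can be compared exactly before and after the box is added. The comparison shows that
balancedness of either tableau forces `B(a, j) < B(a, j + 1)` for all `a < i`: at the lowest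
violation, the exceedance at `(a, j)` would be at most that at `(a, j + 1)`, whereas balancedness
makes it larger. Granted these inequalities, the gain or loss of exceedances agrees with the change
of rank at every box, so balancedness transfers in both directions.

The largest entry of a balanced tableau has rank one, hence ends its row. Therefore containing
`N + 1` in row `i` is the same as containing it in the new box, and since the box-adding maps
preserve the row of every smaller entry, the bijections compose.
-/

lemma bijOn_sep {α β : Type*} {f : α → β} {s : Set α} {t : Set β} {p : α → Prop} {q : β → Prop}
    (hf : Set.BijOn f s t) (hpq : ∀ x ∈ s, q (f x) ↔ p x) :
    Set.BijOn f {x ∈ s | p x} {y ∈ t | q y} := by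
  have hset : s ∩ f ⁻¹' {y ∈ t | q y} = {x ∈ s | p x} := by
    ext x
    exact ⟨fun hx => ⟨hx.1, (hpq x hx.1).1 hx.2.2⟩,
      fun hx => ⟨hx.1, hf.mapsTo hx.1, (hpq x hx.1).2 hx.2⟩⟩
  exact hset ▸ hf.subset_right (Set.sep_subset t q)

/-! ### Shifted diagrams and hooks -/

section Shapes

variable {d i : ℕ} {lam lam' : ℕ → ℕ} {B : ℤ × ℤ → ℕ}

lemma mem_diagram {a c : ℤ} :
    (a, c) ∈ Diagram d lam ↔ 1 ≤ a ∧ a ≤ d ∧ a - d ≤ c ∧ c + d + 1 ≤ lam a.toNat + a :=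
  Iff.rfl

lemma mem_extHook {i c a b : ℤ} :
    (a, b) ∈ ExtHook d lam i c ↔ (a = i ∧ b = c) ∨
      ((a, b) ∈ Diagram d lam ∧ ((a = i ∧ c < b) ∨ (b = c ∧ i < a) ∨ (c < 0 ∧ a = d + 1 + c))) ∨
      (c < 0 ∧ a = d + 1 + c ∧ b = c) := by
  simp only [ExtHook, Hook, Set.mem_union, Set.mem_singleton_iff, Set.mem_ofPred_eq, Prod.mk.injEq]
  tauto

lemma finite_diagram : (Diagram d lam).Finite := by
  refine (Set.Finite.biUnion (Set.finite_Icc (1 : ℤ) d) fun a _ =>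
    (Set.finite_Icc (a - d) (lam a.toNat + a - d - 1)).image (Prod.mk a)).subset ?_
  rintro ⟨a, c⟩ hp
  rw [mem_diagram] at hp
  exact Set.mem_biUnion (show a ∈ Set.Icc (1 : ℤ) d from ⟨hp.1, hp.2.1⟩)
    (Set.mem_image_of_mem _ ⟨by omega, by omega⟩)

lemma finite_extHook {a c : ℤ} : (ExtHook d lam a c).Finite := by
  refine (finite_diagram (d := d) (lam := lam) |>.insert (a, c) |>.insert (d + 1 + c, c)).subset ?_
  rintro ⟨x, y⟩ hq
  rw [mem_extHook] at hq
  simp only [Set.mem_insert_iff, Prod.mk.injEq]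
  tauto

lemma row_le_of_mem_extHook {a c : ℤ} {q : ℤ × ℤ} (hp : (a, c) ∈ Diagram d lam)
    (hq : q ∈ ExtHook d lam a c) : q.1 ≤ d := by
  obtain ⟨x, y⟩ := q
  simp only [mem_extHook, mem_diagram] at hp hq
  dsimp only
  omega

lemma extFilling_of_mem {p : ℤ × ℤ} (hp : p ∈ Diagram d lam) : ExtFilling d B p = B p := by
  obtain ⟨a, c⟩ := p
  rw [mem_diagram] at hp
  exact if_neg (by dsimp only; omega)

lemma IsFilling.le_sizeP (hB : IsFilling d lam B) (p : ℤ × ℤ) : B p ≤ sizeP d lam := by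
  by_cases hp : p ∈ Diagram d lam
  · exact (hB.1.mapsTo hp).2
  · exact hB.2 p hp ▸ Nat.zero_le _

lemma IsFilling.mem_diagram_of_pos (hB : IsFilling d lam B) {p : ℤ × ℤ} (hp : 0 < B p) :
    p ∈ Diagram d lam := by
  by_contra hp'
  exact hp.ne' (hB.2 p hp')

lemma IsBalanced.congr (h : ∀ t, 1 ≤ t → t ≤ d → lam t = lam' t) (hB : IsBalanced d lam B) :
    IsBalanced d lam' B := by
  have hD : Diagram d lam = Diagram d lam' := by
    ext ⟨a, c⟩
    simp only [mem_diagram]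
    by_cases ha : 1 ≤ a ∧ a ≤ d
    · rw [h a.toNat (by omega) (by omega)]
    · omega
  have hsize : sizeP d lam = sizeP d lam' :=
    Finset.sum_congr rfl fun t ht => h t (Finset.mem_Icc.1 ht).1 (Finset.mem_Icc.1 ht).2
  have hrk : ∀ p ∈ Diagram d lam, rk d lam p.1 p.2 = rk d lam' p.1 p.2 := by
    rintro ⟨a, c⟩ hp
    rw [mem_diagram] at hp
    unfold rk
    dsimp only
    split_ifs with hc
    · rw [h a.toNat (by omega) (by omega)]
    · rw [h a.toNat (by omega) (by omega), h (d + 1 + c : ℤ).toNat (by omega) (by omega)]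
  have hH : ExtHook d lam = ExtHook d lam' := by
    unfold ExtHook Hook
    rw [hD]
  obtain ⟨hfill, hbal⟩ := hB
  refine ⟨by rwa [IsFilling, ← hD, ← hsize], fun p hp => ?_⟩
  rw [← hD] at hp
  rw [← hH, ← hrk p hp, hbal p hp]

lemma IsStrictPartition.antitoneOn_add_self (h : IsStrictPartition d lam) :
    AntitoneOn (fun t => lam t + t) (Set.Icc 1 d) := by
  refine antitoneOn_of_succ_le Set.ordConnected_Icc fun t _ ht ht' => ?_
  have := h.1 t ht.1 ht'.2
  simp only [Order.succ_eq_add_one]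
  omega

lemma IsStrictPartition.lt_add_self (h : IsStrictPartition d lam) {t : ℕ} (ht : 1 ≤ t)
    (htd : t ≤ d) : d < lam t + t := by
  have := h.antitoneOn_add_self ⟨ht, htd⟩ ⟨ht.trans htd, le_rfl⟩ htd
  have := h.2
  dsimp only at *
  omega

lemma rk_eq_one_iff (h : IsStrictPartition d lam) {a c : ℤ} (hp : (a, c) ∈ Diagram d lam) :
    rk d lam a c = 1 ↔ c + d + 1 = lam a.toNat + a := by
  rw [mem_diagram] at hp
  have harm := h.lt_add_self (t := a.toNat) (by omega) (by omega)
  unfold rk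
  split_ifs with hc
  · omega
  · have := h.lt_add_self (t := (d + 1 + c : ℤ).toNat) (by omega) (by omega)
    omega

lemma coe_stepShape_toNat {a : ℤ} (ha : 0 ≤ a) :
    (stepShape lam i a.toNat : ℤ) = lam a.toNat + if a = i then 1 else 0 := by
  by_cases hai : a = i
  · simp [stepShape, hai]
  · simp [stepShape, hai, show a.toNat ≠ i by omega]

lemma rk_stepShape_of_row_ne {a c : ℤ} (ha : 0 ≤ a) (hai : a ≠ i) (hc : 0 ≤ c) :
    rk d (stepShape lam i) a c = rk d lam a c := by
  rw [rk, rk, if_pos hc, if_pos hc, coe_stepShape_toNat ha, if_neg hai, add_zero]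

lemma rk_add_one {a c : ℤ} (hc : 0 ≤ c) : rk d lam a (c + 1) = rk d lam a c - 1 := by
  rw [rk, rk, if_pos hc, if_pos (by omega)]
  ring

lemma sizeP_stepShape (hi : 1 ≤ i) (hid : i ≤ d) :
    sizeP d (stepShape lam i) = sizeP d lam + 1 := by
  have hstep : ∀ t, stepShape lam i t = lam t + if t = i then 1 else 0 := fun t => by
    unfold stepShape
    split_ifs with ht <;> simp [ht]
  simp [sizeP, hstep, Finset.sum_add_distrib, hi, hid]

end Shapes

/-! ### Exceedances -/

section Exceedance

variable {d : ℕ} {lam : ℕ → ℕ} {B : ℤ × ℤ → ℕ}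

/-- The number of boxes of `H` whose entry in the extended filling `B̃` is larger than `m`. -/
noncomputable def countAbove (d : ℕ) (B : ℤ × ℤ → ℕ) (m : ℕ) (H : Set (ℤ × ℤ)) : ℕ :=
  {q ∈ H | m < ExtFilling d B q}.ncard

/-- The number of entries larger than `B p` in the extended hook of `p`. -/
noncomputable def exceedance (d : ℕ) (lam : ℕ → ℕ) (B : ℤ × ℤ → ℕ) (p : ℤ × ℤ) : ℕ :=
  countAbove d B (B p) (ExtHook d lam p.1 p.2)

/-- The condition that `IsBalanced` imposes at the single box `p`. -/
def IsBalancedAt (d : ℕ) (lam : ℕ → ℕ) (B : ℤ × ℤ → ℕ) (p : ℤ × ℤ) : Prop :=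
  (exceedance d lam B p : ℤ) = rk d lam p.1 p.2 - 1

lemma isBalanced_iff :
    IsBalanced d lam B ↔ IsFilling d lam B ∧ ∀ p ∈ Diagram d lam, IsBalancedAt d lam B p :=
  Iff.rfl

lemma countAbove_insert {H : Set (ℤ × ℤ)} (hH : H.Finite) {q : ℤ × ℤ} (hq : q ∉ H) (m : ℕ) :
    countAbove d B m (insert q H) =
      countAbove d B m H + if m < ExtFilling d B q then 1 else 0 := by
  unfold countAbove
  split_ifs with hm
  · have hset : {x ∈ insert q H | m < ExtFilling d B x} =
        insert q {x ∈ H | m < ExtFilling d B x} := by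
      ext x
      simp only [Set.mem_sep_iff, Set.mem_insert_iff]
      grind
    rw [hset, Set.ncard_insert_of_notMem (fun h => hq h.1) (hH.subset (Set.sep_subset _ _))]
  · congr 1
    ext x
    simp only [Set.mem_sep_iff, Set.mem_insert_iff]
    grind

lemma exceedance_eq_zero_of_eq_sizeP (hB : IsFilling d lam B) {p : ℤ × ℤ}
    (hp : B p = sizeP d lam) : exceedance d lam B p = 0 := by
  have hle : ∀ q, ExtFilling d B q ≤ B p := fun q => by
    unfold ExtFilling
    split_ifs <;> exact hp ▸ hB.le_sizeP _
  simp only [exceedance, countAbove, (hle _).not_gt, and_false, Set.ofPred_false, Set.ncard_empty]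

lemma isBalancedAt_iff_of_eq_sizeP (h : IsStrictPartition d lam) (hB : IsFilling d lam B)
    {a c : ℤ} (hp : (a, c) ∈ Diagram d lam) (hmax : B (a, c) = sizeP d lam) :
    IsBalancedAt d lam B (a, c) ↔ c + d + 1 = lam a.toNat + a := by
  rw [← rk_eq_one_iff h hp, IsBalancedAt, exceedance_eq_zero_of_eq_sizeP hB hmax]
  dsimp only
  omega

end Exceedance

/-! ### Swapping two adjacent columns -/

section ColSwap

variable {j : ℤ}

/-- The permutation of the grid exchanging columns `j` and `j + 1`, in all rows. -/
def colSwap (j : ℤ) : Equiv.Perm (ℤ × ℤ) :=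
  (Equiv.refl ℤ).prodCongr (Equiv.swap j (j + 1))

lemma colSwap_left {a : ℤ} : colSwap j (a, j) = (a, j + 1) := by simp [colSwap]

lemma colSwap_right {a : ℤ} : colSwap j (a, j + 1) = (a, j) := by simp [colSwap]

lemma colSwap_of_ne {a c : ℤ} (hc : c ≠ j) (hc' : c ≠ j + 1) : colSwap j (a, c) = (a, c) := by
  simp [colSwap, Equiv.swap_apply_of_ne_of_ne hc hc']

lemma colSwap_colSwap (q : ℤ × ℤ) : colSwap j (colSwap j q) = q := by
  obtain ⟨a, c⟩ := q
  simp [colSwap]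

end ColSwap

/-! ### Adding a box -/

section AddBox

variable {d i : ℕ} {lam : ℕ → ℕ} {B T : ℤ × ℤ → ℕ}

/-- The column of the box added at the end of row `i`; the paper's `j = λ_i + i - d`. -/
def newCol (d : ℕ) (lam : ℕ → ℕ) (i : ℕ) : ℤ := lam i + i - d

/-- The box added at the end of row `i`. -/
def newBox (d : ℕ) (lam : ℕ → ℕ) (i : ℕ) : ℤ × ℤ := (i, newCol d lam i)

/-- The hypothesis of the box-adding lemma: `lam` is a strict partition with `d` parts and a box
can be added at the end of its row `i` so that the rows above are longer by at least two. -/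
structure IsPaddableRow (d : ℕ) (lam : ℕ → ℕ) (i : ℕ) : Prop where
  strict : IsStrictPartition d lam
  one_le : 1 ≤ i
  le : i ≤ d
  gap : 1 < i → lam i + 3 ≤ lam (i - 1)

lemma newBox_notMem : newBox d lam i ∉ Diagram d lam := by
  rw [newBox, newCol, mem_diagram, Int.toNat_natCast]
  omega

lemma diagram_stepShape (hi : 1 ≤ i) (hid : i ≤ d) :
    Diagram d (stepShape lam i) = insert (newBox d lam i) (Diagram d lam) := by
  ext ⟨a, c⟩
  rw [Set.mem_insert_iff, newBox, newCol, Prod.mk.injEq, mem_diagram, mem_diagram]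
  by_cases ha : 0 ≤ a
  · rw [coe_stepShape_toNat ha]
    split_ifs with hai
    · subst hai
      rw [Int.toNat_natCast]
      omega
    · omega
  · omega

lemma isFilling_stepShape_iff (hi : 1 ≤ i) (hid : i ≤ d)
    (hmax : T (newBox d lam i) = sizeP d lam + 1) :
    IsFilling d (stepShape lam i) T ↔
      IsFilling d lam (Function.update T (newBox d lam i) 0) := by
  have hIcc : insert (T (newBox d lam i)) (Set.Icc 1 (sizeP d lam)) =
      Set.Icc 1 (sizeP d (stepShape lam i)) := by
    rw [hmax, sizeP_stepShape hi hid, Set.insert_Icc_right_eq_Icc_add_one (by omega)]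
  have hEqOn : Set.EqOn T (Function.update T (newBox d lam i) 0) (Diagram d lam) := fun p hp =>
    (Function.update_of_ne (fun h => newBox_notMem (h ▸ hp)) _ _).symm
  unfold IsFilling
  rw [← hIcc, diagram_stepShape hi hid,
    Set.BijOn.insert_iff newBox_notMem (by rw [hmax, Set.mem_Icc]; omega), hEqOn.bijOn_iff]
  refine and_congr_right fun _ => forall_congr' fun p => ?_
  by_cases hp : p = newBox d lam i
  · simp [hp, newBox_notMem]
  · simp [hp]

lemma IsFilling.comp_perm (hB : IsFilling d lam B) (e : Equiv.Perm (ℤ × ℤ))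
    (he : ∀ q, e q ∈ Diagram d lam ↔ q ∈ Diagram d lam) : IsFilling d lam (B ∘ e) :=
  ⟨hB.1.comp (e.bijOn he), fun q hq => hB.2 _ (mt (he q).1 hq)⟩

namespace IsPaddableRow

variable (h : IsPaddableRow d lam i)
include h

lemma newCol_pos : 0 < newCol d lam i := by
  have := h.strict.lt_add_self h.one_le h.le
  unfold newCol
  omega

lemma row_cases {a : ℤ} (ha : 1 ≤ a) (had : a ≤ d) :
    (a < i ∧ newCol d lam i + d + 2 ≤ lam a.toNat + a) ∨
      (i ≤ a ∧ lam a.toNat + a ≤ newCol d lam i + d) := by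
  have hi := h.one_le
  have hid := h.le
  unfold newCol
  rcases lt_or_ge a i with hai | hai
  · have := h.strict.antitoneOn_add_self (a := a.toNat) (b := i - 1) ⟨by omega, by omega⟩
      ⟨by omega, by omega⟩ (by omega)
    have := h.gap (by omega)
    dsimp only at *
    omega
  · have := h.strict.antitoneOn_add_self (a := i) (b := a.toNat) ⟨hi, hid⟩
      ⟨by omega, by omega⟩ (by omega)
    dsimp only at *
    omega

lemma left_mem_iff {a : ℤ} : (a, newCol d lam i) ∈ Diagram d lam ↔ 1 ≤ a ∧ a < i := by
  have hid := h.le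
  have hj := h.newCol_pos
  rw [mem_diagram]
  by_cases ha : 1 ≤ a ∧ a ≤ d
  · have := h.row_cases ha.1 ha.2
    omega
  · omega

lemma right_mem_iff {a : ℤ} : (a, newCol d lam i + 1) ∈ Diagram d lam ↔ 1 ≤ a ∧ a < i := by
  have hid := h.le
  have hj := h.newCol_pos
  rw [mem_diagram]
  by_cases ha : 1 ≤ a ∧ a ≤ d
  · have := h.row_cases ha.1 ha.2
    omega
  · omega

lemma colSwap_mem_iff (q : ℤ × ℤ) :
    colSwap (newCol d lam i) q ∈ Diagram d lam ↔ q ∈ Diagram d lam := by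
  obtain ⟨a, c⟩ := q
  by_cases hc : c = newCol d lam i
  · rw [hc, colSwap_left, h.left_mem_iff, h.right_mem_iff]
  by_cases hc' : c = newCol d lam i + 1
  · rw [hc', colSwap_right, h.left_mem_iff, h.right_mem_iff]
  rw [colSwap_of_ne hc hc']

lemma isStrictPartition_stepShape : IsStrictPartition d (stepShape lam i) := by
  refine ⟨fun t ht htd => ?_, h.strict.2.trans ?_⟩
  · have hlt := h.strict.1 t ht htd
    have hgap := h.gap
    unfold stepShape
    split_ifs with hnext hcur hcur
    · omega
    · subst hnext
      have := hgap (by omega)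
      rw [Nat.add_sub_cancel] at this
      omega
    · subst hcur
      omega
    · exact hlt
  · unfold stepShape
    split_ifs with hd
    · subst hd
      omega
    · rfl

lemma addBox_eq_update (N : ℕ) (hB : ∀ p ∉ Diagram d lam, B p = 0) :
    addBox d lam i N B =
      Function.update (B ∘ colSwap (newCol d lam i)) (newBox d lam i) (N + 1) := by
  have hoff : ∀ q, ¬(1 ≤ q.1 ∧ q.1 < (i : ℤ)) →
      q.2 = newCol d lam i ∨ q.2 = newCol d lam i + 1 → B q = 0 := by
    rintro ⟨a, c⟩ ha (hc | hc) <;> obtain rfl : c = _ := hc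
    · exact hB _ (mt h.left_mem_iff.1 ha)
    · exact hB _ (mt h.right_mem_iff.1 ha)
  have hcol : (lam i : ℤ) + i - d = newCol d lam i := rfl
  funext ⟨a, c⟩
  simp only [addBox, hcol, Function.update_apply, Function.comp_apply, newBox]
  split_ifs with hnew hleft hright
  · rfl
  · rw [hleft.2.2, colSwap_left]
  · rw [hright.2.2, colSwap_right, add_sub_cancel_right]
  · by_cases hc : c = newCol d lam i
    · subst hc
      rw [colSwap_left, hoff _ (by tauto) (.inl rfl), hoff _ (by tauto) (.inr rfl)]
    by_cases hc' : c = newCol d lam i + 1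
    · subst hc'
      rw [colSwap_right, hoff _ (by tauto) (.inr rfl), hoff _ (by tauto) (.inl rfl)]
    rw [colSwap_of_ne hc hc']

lemma bijOn_addBox_isFilling :
    Set.BijOn (addBox d lam i (sizeP d lam)) {B | IsFilling d lam B}
      {T ∈ {T | IsFilling d (stepShape lam i) T} | T (newBox d lam i) = sizeP d lam + 1} := by
  set e := colSwap (newCol d lam i)
  have hupdate : ∀ {B}, IsFilling d lam B → addBox d lam i (sizeP d lam) B =
      Function.update (B ∘ e) (newBox d lam i) (sizeP d lam + 1) := fun hB =>
    h.addBox_eq_update _ hB.2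
  have hinv : ∀ B : ℤ × ℤ → ℕ, (B ∘ e) ∘ e = B := fun B =>
    funext fun q => congrArg B (colSwap_colSwap q)
  have hperm : ∀ {B}, IsFilling d lam B → IsFilling d lam (B ∘ e) := fun hB =>
    hB.comp_perm e h.colSwap_mem_iff
  have herase : ∀ {B}, IsFilling d lam B → Function.update B (newBox d lam i) 0 = B := fun hB =>
    Function.update_eq_self_iff.2 (hB.2 _ newBox_notMem).symm
  refine Set.InvOn.bijOn (f' := fun T => Function.update T (newBox d lam i) 0 ∘ e)
    ⟨fun B hB => ?_, fun T hT => ?_⟩ (fun B hB => ?_) fun T hT => ?_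
  · dsimp only
    rw [hupdate hB, Function.update_idem, herase (hperm hB), hinv]
  · have hT' := (isFilling_stepShape_iff h.one_le h.le hT.2).1 hT.1
    rw [hupdate (hperm hT'), hinv, Function.update_idem, ← hT.2, Function.update_eq_self]
  · have hnew := hupdate hB
    refine ⟨(isFilling_stepShape_iff h.one_le h.le (by rw [hnew, Function.update_self])).2 ?_,
      by rw [hnew, Function.update_self]⟩
    rw [hnew, Function.update_idem, herase (hperm hB)]
    exact hperm hB
  · exact hperm ((isFilling_stepShape_iff h.one_le h.le hT.2).1 hT.1)

lemma colSwap_mem_extHook_iff {a c : ℤ} (hc : c ≠ newCol d lam i) (hc' : c ≠ newCol d lam i + 1)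
    (q : ℤ × ℤ) :
    colSwap (newCol d lam i) q ∈ ExtHook d lam a c ↔ q ∈ ExtHook d lam a c := by
  obtain ⟨x, y⟩ := q
  by_cases hy : y = newCol d lam i
  · subst hy
    rw [colSwap_left, mem_extHook, mem_extHook, h.left_mem_iff, h.right_mem_iff]
    omega
  by_cases hy' : y = newCol d lam i + 1
  · subst hy'
    rw [colSwap_right, mem_extHook, mem_extHook, h.left_mem_iff, h.right_mem_iff]
    omega
  rw [colSwap_of_ne hy hy']

lemma extHook_left {a : ℤ} (ha : 1 ≤ a) (hai : a < i) :
    ExtHook d lam a (newCol d lam i) = insert (a, newCol d lam i + 1)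
      (colSwap (newCol d lam i) ⁻¹' ExtHook d lam a (newCol d lam i + 1)) := by
  have hj := h.newCol_pos
  ext ⟨x, y⟩
  rw [Set.mem_insert_iff, Set.mem_preimage, Prod.mk.injEq]
  by_cases hy : y = newCol d lam i
  · subst hy
    rw [colSwap_left, mem_extHook, mem_extHook, h.left_mem_iff, h.right_mem_iff]
    omega
  by_cases hy' : y = newCol d lam i + 1
  · subst hy'
    rw [colSwap_right, mem_extHook, mem_extHook, h.left_mem_iff, h.right_mem_iff]
    omega
  rw [colSwap_of_ne hy hy', mem_extHook, mem_extHook]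
  grind

lemma left_notMem_extHook_right {a : ℤ} :
    (a, newCol d lam i) ∉ ExtHook d lam a (newCol d lam i + 1) := by
  have hj := h.newCol_pos
  rw [mem_extHook]
  omega

lemma preimage_extHook_left {a : ℤ} (ha : 1 ≤ a) (hai : a < i) :
    colSwap (newCol d lam i) ⁻¹' ExtHook d lam a (newCol d lam i) =
      insert (a, newCol d lam i) (ExtHook d lam a (newCol d lam i + 1)) := by
  ext q
  rw [Set.mem_preimage, h.extHook_left ha hai, Set.mem_insert_iff, Set.mem_insert_iff,
    Set.mem_preimage, colSwap_colSwap, ← colSwap_left, (colSwap _).injective.eq_iff]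

lemma newBox_notMem_extHook {a c : ℤ} (hp : (a, c) ∈ Diagram d lam) :
    newBox d lam i ∉ ExtHook d lam a c := by
  have hj := h.newCol_pos
  have hnew : newBox d lam i ∉ Diagram d lam := newBox_notMem
  rw [newBox] at hnew ⊢
  rw [mem_extHook]
  rintro (⟨rfl, rfl⟩ | hmem | hlow)
  · exact hnew hp
  · exact hnew hmem.1
  · omega

lemma newBox_mem_extHook_stepShape_iff {a c : ℤ} (hp : (a, c) ∈ Diagram d lam) :
    newBox d lam i ∈ ExtHook d (stepShape lam i) a c ↔
      a = i ∨ c = newCol d lam i ∨ d + 1 + c = i := by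
  have hj := h.newCol_pos
  have hid := h.le
  have hnew : ((i : ℤ), newCol d lam i) ∈ Diagram d (stepShape lam i) := by
    rw [diagram_stepShape h.one_le h.le]
    exact Set.mem_insert _ _
  have hleft := h.left_mem_iff (a := a)
  rw [newBox, mem_extHook, and_iff_right hnew]
  rw [mem_diagram] at hp hleft
  by_cases hai : a = i
  · subst hai
    rw [Int.toNat_natCast] at hp
    unfold newCol at *
    omega
  by_cases hc : c = newCol d lam i
  · subst hc
    omega
  · omega

lemma extHook_stepShape_sdiff_newBox {a c : ℤ} (hp : (a, c) ∈ Diagram d lam) :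
    ExtHook d (stepShape lam i) a c \ {newBox d lam i} = ExtHook d lam a c := by
  ext ⟨x, y⟩
  rw [Set.mem_sdiff, Set.mem_singleton_iff]
  by_cases hq : (x, y) = newBox d lam i
  · rw [hq]
    simpa using h.newBox_notMem_extHook hp
  · rw [mem_extHook, mem_extHook, diagram_stepShape h.one_le h.le, Set.mem_insert_iff,
      or_iff_right hq, and_iff_left hq]

lemma addBox_apply (hB : IsFilling d lam B) {p : ℤ × ℤ} (hp : p ≠ newBox d lam i) (N : ℕ) :
    addBox d lam i N B p = B (colSwap (newCol d lam i) p) := by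
  rw [h.addBox_eq_update _ hB.2, Function.update_of_ne hp, Function.comp_apply]

lemma addBox_newBox (hB : IsFilling d lam B) (N : ℕ) :
    addBox d lam i N B (newBox d lam i) = N + 1 := by
  rw [h.addBox_eq_update _ hB.2, Function.update_self]

lemma extFilling_addBox (hB : IsFilling d lam B) (N : ℕ) {q : ℤ × ℤ} (hq : q.1 ≤ d)
    (hnew : q ≠ newBox d lam i) :
    ExtFilling d (addBox d lam i N B) q = ExtFilling d B (colSwap (newCol d lam i) q) := by
  obtain ⟨x, y⟩ := q
  have hj := h.newCol_pos
  dsimp only at hq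
  by_cases hy : y = x - (d + 1)
  · have hxy : colSwap (newCol d lam i) (x, y) = (x, y) := colSwap_of_ne (by omega) (by omega)
    have hzero : colSwap (newCol d lam i) (x, 0) = (x, 0) := colSwap_of_ne (by omega) (by omega)
    have hne : (x, 0) ≠ newBox d lam i := fun heq => hj.ne (congrArg Prod.snd heq)
    rw [hxy, ExtFilling, ExtFilling, if_pos hy, if_pos hy, h.addBox_apply hB hne, hzero]
  · rw [ExtFilling, if_neg hy, h.addBox_apply hB hnew, ExtFilling, if_neg]
    by_cases hc : y = newCol d lam i
    · rw [hc, colSwap_left]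
      dsimp only
      omega
    by_cases hc' : y = newCol d lam i + 1
    · rw [hc', colSwap_right]
      dsimp only
      omega
    rwa [colSwap_of_ne hc hc']

lemma extFilling_addBox_newBox (hB : IsFilling d lam B) (N : ℕ) :
    ExtFilling d (addBox d lam i N B) (newBox d lam i) = N + 1 := by
  have hj := h.newCol_pos
  have hid := h.le
  rw [ExtFilling, if_neg (by dsimp only [newBox]; omega), h.addBox_newBox hB]

lemma countAbove_addBox (hB : IsFilling d lam B) (N m : ℕ) {H : Set (ℤ × ℤ)}
    (hH : ∀ q ∈ H, q.1 ≤ d) (hnew : newBox d lam i ∉ H) :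
    countAbove d (addBox d lam i N B) m H =
      countAbove d B m (colSwap (newCol d lam i) ⁻¹' H) := by
  set e := colSwap (newCol d lam i)
  have hset : {q ∈ H | m < ExtFilling d (addBox d lam i N B) q} =
      e ⁻¹' {q ∈ e ⁻¹' H | m < ExtFilling d B q} := by
    ext q
    rw [Set.mem_preimage, Set.mem_sep_iff, Set.mem_sep_iff, Set.mem_preimage, colSwap_colSwap]
    exact and_congr_right fun hq => by
      rw [h.extFilling_addBox hB N (hH q hq) (ne_of_mem_of_not_mem hq hnew)]
  rw [countAbove, countAbove, hset,
    Set.ncard_preimage_of_injective_subset_range e.injective (by simp)]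

open Classical in
lemma exceedance_addBox (hB : IsFilling d lam B) {a c : ℤ} (hp : (a, c) ∈ Diagram d lam) :
    exceedance d (stepShape lam i) (addBox d lam i (sizeP d lam) B) (a, c) =
      countAbove d B (B (colSwap (newCol d lam i) (a, c)))
        (colSwap (newCol d lam i) ⁻¹' ExtHook d lam a c) +
      if newBox d lam i ∈ ExtHook d (stepShape lam i) a c then 1 else 0 := by
  have hrow : ∀ q ∈ ExtHook d lam a c, q.1 ≤ d := fun q => row_le_of_mem_extHook hp
  have hnew := h.newBox_notMem_extHook hp
  have hval : B (colSwap (newCol d lam i) (a, c)) < sizeP d lam + 1 :=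
    Nat.lt_succ_of_le (hB.le_sizeP _)
  rw [exceedance, h.addBox_apply hB (fun heq => newBox_notMem (heq ▸ hp)),
    ← h.countAbove_addBox hB (sizeP d lam) _ hrow hnew]
  dsimp only
  split_ifs with hmem
  · rw [← Set.insert_sdiff_self_of_mem hmem, h.extHook_stepShape_sdiff_newBox hp,
      countAbove_insert finite_extHook hnew, h.extFilling_addBox_newBox hB, if_pos hval]
  · rw [← h.extHook_stepShape_sdiff_newBox hp, Set.sdiff_singleton_eq_self hmem, add_zero]

open Classical in
lemma exceedance_addBox_of_ne (hB : IsFilling d lam B) {a c : ℤ} (hp : (a, c) ∈ Diagram d lam)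
    (hc : c ≠ newCol d lam i) (hc' : c ≠ newCol d lam i + 1) :
    exceedance d (stepShape lam i) (addBox d lam i (sizeP d lam) B) (a, c) =
      exceedance d lam B (a, c) +
        if newBox d lam i ∈ ExtHook d (stepShape lam i) a c then 1 else 0 := by
  have hH : colSwap (newCol d lam i) ⁻¹' ExtHook d lam a c = ExtHook d lam a c :=
    Set.ext (h.colSwap_mem_extHook_iff hc hc')
  rw [h.exceedance_addBox hB hp, colSwap_of_ne hc hc', hH, exceedance]

lemma exceedance_left (B : ℤ × ℤ → ℕ) {a : ℤ} (ha : 1 ≤ a) (hai : a < i) :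
    exceedance d lam B (a, newCol d lam i) =
      countAbove d B (B (a, newCol d lam i))
        (colSwap (newCol d lam i) ⁻¹' ExtHook d lam a (newCol d lam i + 1)) +
      if B (a, newCol d lam i) < B (a, newCol d lam i + 1) then 1 else 0 := by
  rw [exceedance, h.extHook_left ha hai, countAbove_insert, extFilling_of_mem]
  · exact h.right_mem_iff.2 ⟨ha, hai⟩
  · exact finite_extHook.preimage (colSwap _).injective.injOn
  · rw [Set.mem_preimage, colSwap_right]
    exact h.left_notMem_extHook_right

lemma exceedance_addBox_right (hB : IsFilling d lam B) {a : ℤ} (ha : 1 ≤ a) (hai : a < i) :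
    exceedance d (stepShape lam i) (addBox d lam i (sizeP d lam) B) (a, newCol d lam i + 1) +
        (if B (a, newCol d lam i) < B (a, newCol d lam i + 1) then 1 else 0) =
      exceedance d lam B (a, newCol d lam i) := by
  classical
  have hj := h.newCol_pos
  have hid := h.le
  have hp := h.right_mem_iff.2 ⟨ha, hai⟩
  rw [h.exceedance_addBox hB hp, h.newBox_mem_extHook_stepShape_iff hp, if_neg (by omega),
    colSwap_right, add_zero, h.exceedance_left B ha hai]

lemma exceedance_addBox_left (hB : IsFilling d lam B) {a : ℤ} (ha : 1 ≤ a) (hai : a < i) :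
    exceedance d (stepShape lam i) (addBox d lam i (sizeP d lam) B) (a, newCol d lam i) =
      exceedance d lam B (a, newCol d lam i + 1) +
        (if B (a, newCol d lam i + 1) < B (a, newCol d lam i) then 1 else 0) + 1 := by
  classical
  have hp := h.left_mem_iff.2 ⟨ha, hai⟩
  rw [h.exceedance_addBox hB hp, h.newBox_mem_extHook_stepShape_iff hp, if_pos (by tauto),
    colSwap_left, h.preimage_extHook_left ha hai,
    countAbove_insert finite_extHook h.left_notMem_extHook_right, extFilling_of_mem hp, exceedance]

open Classical in
lemma rk_stepShape_of_ne {a c : ℤ} (hp : (a, c) ∈ Diagram d lam) (hc : c ≠ newCol d lam i) :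
    rk d (stepShape lam i) a c =
      rk d lam a c + if newBox d lam i ∈ ExtHook d (stepShape lam i) a c then 1 else 0 := by
  have hid := h.le
  simp only [h.newBox_mem_extHook_stepShape_iff hp]
  rw [mem_diagram] at hp
  unfold rk
  rw [coe_stepShape_toNat (by omega)]
  by_cases hneg : 0 ≤ c
  · simp only [if_pos hneg]
    split_ifs <;> omega
  · rw [if_neg hneg, if_neg hneg, coe_stepShape_toNat (by omega)]
    split_ifs <;> omega

lemma isBalancedAt_addBox_iff_of_ne (hB : IsFilling d lam B) {a c : ℤ}
    (hp : (a, c) ∈ Diagram d lam) (hc : c ≠ newCol d lam i) (hc' : c ≠ newCol d lam i + 1) :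
    IsBalancedAt d (stepShape lam i) (addBox d lam i (sizeP d lam) B) (a, c) ↔
      IsBalancedAt d lam B (a, c) := by
  rw [IsBalancedAt, IsBalancedAt, h.exceedance_addBox_of_ne hB hp hc hc',
    h.rk_stepShape_of_ne hp hc]
  push_cast
  omega

lemma isBalancedAt_addBox_right_iff (hB : IsFilling d lam B) {a : ℤ} (ha : 1 ≤ a) (hai : a < i)
    (hasc : B (a, newCol d lam i) < B (a, newCol d lam i + 1)) :
    IsBalancedAt d (stepShape lam i) (addBox d lam i (sizeP d lam) B) (a, newCol d lam i + 1) ↔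
      IsBalancedAt d lam B (a, newCol d lam i) := by
  have hj := h.newCol_pos
  have hexc := h.exceedance_addBox_right hB ha hai
  rw [if_pos hasc] at hexc
  rw [IsBalancedAt, IsBalancedAt, ← hexc,
    rk_stepShape_of_row_ne (ha.trans' zero_le_one) hai.ne (by omega), rk_add_one hj.le]
  push_cast
  omega

lemma isBalancedAt_addBox_left_iff (hB : IsFilling d lam B) {a : ℤ} (ha : 1 ≤ a) (hai : a < i)
    (hasc : B (a, newCol d lam i) < B (a, newCol d lam i + 1)) :
    IsBalancedAt d (stepShape lam i) (addBox d lam i (sizeP d lam) B) (a, newCol d lam i) ↔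
      IsBalancedAt d lam B (a, newCol d lam i + 1) := by
  have hj := h.newCol_pos
  rw [IsBalancedAt, IsBalancedAt, h.exceedance_addBox_left hB ha hai, if_neg hasc.not_gt,
    rk_stepShape_of_row_ne (ha.trans' zero_le_one) hai.ne hj.le, rk_add_one hj.le]
  push_cast
  omega

lemma exceedance_left_le_right {a : ℤ} (ha : 1 ≤ a) (hai : a < i)
    (hdesc : B (a, newCol d lam i + 1) < B (a, newCol d lam i))
    (hasc : ∀ b, a < b → b < i → B (b, newCol d lam i) < B (b, newCol d lam i + 1)) :
    exceedance d lam B (a, newCol d lam i) ≤ exceedance d lam B (a, newCol d lam i + 1) := by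
  have hj := h.newCol_pos
  rw [h.exceedance_left B ha hai, if_neg hdesc.not_gt, add_zero]
  refine Set.ncard_le_ncard_of_injOn (colSwap (newCol d lam i)) ?_ (Equiv.injective _).injOn
    (finite_extHook.subset (Set.sep_subset _ _))
  rintro ⟨x, y⟩ ⟨hmem, habove⟩
  refine ⟨hmem, ?_⟩
  rw [Set.mem_preimage] at hmem
  by_cases hy : y = newCol d lam i
  · subst hy
    rw [colSwap_left, mem_extHook, h.right_mem_iff] at hmem
    rw [extFilling_of_mem (h.left_mem_iff.2 (by omega))] at habove
    have hxa : x ≠ a := by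
      rintro rfl
      exact habove.false
    rw [colSwap_left, extFilling_of_mem (h.right_mem_iff.2 (by omega))]
    exact hdesc.trans (habove.trans (hasc x (by omega) (by omega)))
  by_cases hy' : y = newCol d lam i + 1
  · subst hy'
    rw [colSwap_right, mem_extHook] at hmem
    omega
  rw [colSwap_of_ne hy hy']
  exact hdesc.trans habove

lemma ascends_of_exceedance_lt (hB : IsFilling d lam B)
    (hdesc : ∀ a : ℤ, 1 ≤ a → a < i → B (a, newCol d lam i + 1) < B (a, newCol d lam i) →
      exceedance d lam B (a, newCol d lam i + 1) < exceedance d lam B (a, newCol d lam i))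
    {a : ℤ} (ha : 1 ≤ a) (hai : a < i) :
    B (a, newCol d lam i) < B (a, newCol d lam i + 1) := by
  induction hn : (i - a).toNat using Nat.strong_induction_on generalizing a with
  | _ n ih =>
    by_contra hnot
    have hne : B (a, newCol d lam i) ≠ B (a, newCol d lam i + 1) := fun heq => by
      have := hB.1.injOn (h.left_mem_iff.2 ⟨ha, hai⟩) (h.right_mem_iff.2 ⟨ha, hai⟩) heq
      simp at this
    have hlt := lt_of_le_of_ne (not_lt.1 hnot) hne.symm
    exact (hdesc a ha hai hlt).not_ge <| h.exceedance_left_le_right ha hai hlt fun b hab hbi =>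
      ih _ (by omega) (by omega) hbi rfl

lemma ascends_of_isBalanced (hB : IsBalanced d lam B) {a : ℤ} (ha : 1 ≤ a) (hai : a < i) :
    B (a, newCol d lam i) < B (a, newCol d lam i + 1) := by
  refine h.ascends_of_exceedance_lt hB.1 (fun b hb hbi _ => ?_) ha hai
  have hleft : IsBalancedAt _ _ _ _ := hB.2 _ (h.left_mem_iff.2 ⟨hb, hbi⟩)
  have hright : IsBalancedAt _ _ _ _ := hB.2 _ (h.right_mem_iff.2 ⟨hb, hbi⟩)
  have hrk := rk_add_one (d := d) (lam := lam) (a := b) h.newCol_pos.le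
  unfold IsBalancedAt at hleft hright
  dsimp only at hleft hright
  omega

lemma ascends_of_isBalanced_addBox (hB : IsFilling d lam B)
    (hT : IsBalanced d (stepShape lam i) (addBox d lam i (sizeP d lam) B)) {a : ℤ} (ha : 1 ≤ a)
    (hai : a < i) : B (a, newCol d lam i) < B (a, newCol d lam i + 1) := by
  refine h.ascends_of_exceedance_lt hB (fun b hb hbi hlt => ?_) ha hai
  have hsub : Diagram d lam ⊆ Diagram d (stepShape lam i) := by
    rw [diagram_stepShape h.one_le h.le]
    exact Set.subset_insert _ _
  have hleft : IsBalancedAt _ _ _ _ := hT.2 _ (hsub (h.left_mem_iff.2 ⟨hb, hbi⟩))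
  have hright : IsBalancedAt _ _ _ _ := hT.2 _ (hsub (h.right_mem_iff.2 ⟨hb, hbi⟩))
  have hexcLeft := h.exceedance_addBox_left hB hb hbi
  have hexcRight := h.exceedance_addBox_right hB hb hbi
  have hrk := rk_add_one (d := d) (lam := stepShape lam i) (a := b) h.newCol_pos.le
  rw [if_pos hlt] at hexcLeft
  rw [if_neg hlt.not_gt] at hexcRight
  unfold IsBalancedAt at hleft hright
  dsimp only at hleft hright
  omega

lemma isBalancedAt_addBox_colSwap_iff (hB : IsFilling d lam B)
    (hasc : ∀ a : ℤ, 1 ≤ a → a < i → B (a, newCol d lam i) < B (a, newCol d lam i + 1))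
    {p : ℤ × ℤ} (hp : p ∈ Diagram d lam) :
    IsBalancedAt d (stepShape lam i) (addBox d lam i (sizeP d lam) B)
      (colSwap (newCol d lam i) p) ↔ IsBalancedAt d lam B p := by
  obtain ⟨a, c⟩ := p
  by_cases hc : c = newCol d lam i
  · subst hc
    obtain ⟨ha, hai⟩ := h.left_mem_iff.1 hp
    rw [colSwap_left, h.isBalancedAt_addBox_right_iff hB ha hai (hasc a ha hai)]
  by_cases hc' : c = newCol d lam i + 1
  · subst hc'
    obtain ⟨ha, hai⟩ := h.right_mem_iff.1 hp
    rw [colSwap_right, h.isBalancedAt_addBox_left_iff hB ha hai (hasc a ha hai)]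
  rw [colSwap_of_ne hc hc', h.isBalancedAt_addBox_iff_of_ne hB hp hc hc']

lemma isBalancedAt_addBox_newBox (hB : IsFilling d lam B) :
    IsBalancedAt d (stepShape lam i) (addBox d lam i (sizeP d lam) B) (newBox d lam i) := by
  have hT := h.bijOn_addBox_isFilling.mapsTo hB
  have hmem : newBox d lam i ∈ Diagram d (stepShape lam i) := by
    rw [diagram_stepShape h.one_le h.le]
    exact Set.mem_insert _ _
  have hmax : addBox d lam i (sizeP d lam) B (newBox d lam i) = sizeP d (stepShape lam i) := by
    rw [hT.2, sizeP_stepShape h.one_le h.le]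
  rw [newBox] at hmem hmax ⊢
  rw [isBalancedAt_iff_of_eq_sizeP h.isStrictPartition_stepShape hT.1 hmem hmax,
    coe_stepShape_toNat (by omega), if_pos rfl, Int.toNat_natCast, newCol]
  ring

lemma isBalanced_addBox_iff (hB : IsFilling d lam B) :
    IsBalanced d (stepShape lam i) (addBox d lam i (sizeP d lam) B) ↔ IsBalanced d lam B := by
  have hT : IsFilling d (stepShape lam i) (addBox d lam i (sizeP d lam) B) :=
    (h.bijOn_addBox_isFilling.mapsTo hB).1
  have hiff (hasc : ∀ a : ℤ, 1 ≤ a → a < i →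
      B (a, newCol d lam i) < B (a, newCol d lam i + 1)) :
      IsBalanced d (stepShape lam i) (addBox d lam i (sizeP d lam) B) ↔ IsBalanced d lam B := by
    rw [isBalanced_iff, isBalanced_iff, and_iff_right hB,
      and_iff_right hT, diagram_stepShape h.one_le h.le, Set.forall_mem_insert,
      and_iff_right (h.isBalancedAt_addBox_newBox hB),
      ← (colSwap (newCol d lam i)).forall_congr_right]
    exact forall_congr' fun p => by
      rw [h.colSwap_mem_iff]
      exact forall_congr' fun hp => h.isBalancedAt_addBox_colSwap_iff hB hasc hp
  exact ⟨fun hbal => (hiff fun a => h.ascends_of_isBalanced_addBox hB hbal).1 hbal,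
    fun hbal => (hiff fun a => h.ascends_of_isBalanced hbal).2 hbal⟩

theorem bijOn_addBox :
    Set.BijOn (addBox d lam i (sizeP d lam)) {B | IsBalanced d lam B}
      {T ∈ {T | IsBalanced d (stepShape lam i) T} | T (newBox d lam i) = sizeP d lam + 1} := by
  convert bijOn_sep h.bijOn_addBox_isFilling fun B hB => h.isBalanced_addBox_iff hB using 1
  · ext B
    exact ⟨fun hB => ⟨hB.1, hB⟩, fun hB => hB.2⟩
  · ext T
    exact ⟨fun hT => ⟨⟨hT.1.1, hT.2⟩, hT.1⟩, fun hT => ⟨hT.2, hT.1.2⟩⟩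

end IsPaddableRow

end AddBox

/-! ### Adding boxes along a list of rows -/

section Padding

variable {d i : ℕ} {lam : ℕ → ℕ} {B T : ℤ × ℤ → ℕ} {L : List ℕ}

/-- Boxes can be added along `L`, starting from the shape `lam`, with the hypothesis of the
box-adding lemma satisfied at each of them. -/
def IsPaddingSeq (d : ℕ) : List ℕ → (ℕ → ℕ) → Prop
  | [], _ => True
  | i :: L, lam => IsPaddableRow d lam i ∧ IsPaddingSeq d L (stepShape lam i)

/-- The entry `k` occurs in row `i` of `T`. No box is required to lie in the shape of `T`: for
`k ≠ 0` this is automatic, fillings being zero off their diagram. -/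
def OccursInRow (T : ℤ × ℤ → ℕ) (i k : ℕ) : Prop := ∃ c : ℤ, T (i, c) = k

/-- The entries `N + 1, N + 2, …` of `T` occur in the rows listed by `L`, in this order. -/
def OccursAlong (T : ℤ × ℤ → ℕ) (L : List ℕ) (N : ℕ) : Prop :=
  ∀ p ∈ L.zipIdx (N + 1), OccursInRow T p.1 p.2

lemma occursAlong_cons {N : ℕ} :
    OccursAlong T (i :: L) N ↔ OccursInRow T i (N + 1) ∧ OccursAlong T L (N + 1) := by
  rw [OccursAlong, List.zipIdx_cons, List.forall_mem_cons, OccursAlong]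

lemma IsPaddableRow.occursInRow_addBox_iff (h : IsPaddableRow d lam i) (hB : IsFilling d lam B)
    {t k : ℕ} (hk : 1 ≤ k) (hkN : k ≤ sizeP d lam) :
    OccursInRow (addBox d lam i (sizeP d lam) B) t k ↔ OccursInRow B t k := by
  constructor
  · rintro ⟨c, hc⟩
    have hne : ((t : ℤ), c) ≠ newBox d lam i := fun heq => by
      rw [heq, h.addBox_newBox hB] at hc
      omega
    rw [h.addBox_apply hB hne] at hc
    exact ⟨_, hc⟩
  · rintro ⟨c, rfl⟩
    have hmem := (h.colSwap_mem_iff _).2 (hB.mem_diagram_of_pos hk)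
    have hne : colSwap (newCol d lam i) (t, c) ≠ newBox d lam i := fun heq =>
      newBox_notMem (heq ▸ hmem)
    exact ⟨_, (h.addBox_apply hB hne _).trans (by rw [colSwap_colSwap])⟩

lemma occursInRow_FmapAux_iff (hL : IsPaddingSeq d L lam) (hB : IsFilling d lam B) {t k : ℕ}
    (hk : 1 ≤ k) (hkN : k ≤ sizeP d lam) :
    OccursInRow (FmapAux d L lam B) t k ↔ OccursInRow B t k := by
  induction L generalizing lam B with
  | nil => rfl
  | cons i L ih =>
    obtain ⟨h, hL⟩ := hL
    rw [FmapAux, ih hL (h.bijOn_addBox_isFilling.mapsTo hB).1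
      (by rw [sizeP_stepShape h.one_le h.le]; omega), h.occursInRow_addBox_iff hB hk hkN]

lemma IsPaddableRow.occursInRow_iff (h : IsPaddableRow d lam i)
    (hT : IsBalanced d (stepShape lam i) T) :
    OccursInRow T i (sizeP d lam + 1) ↔ T (newBox d lam i) = sizeP d lam + 1 := by
  refine ⟨fun ⟨c, hc⟩ => ?_, fun hnew => ⟨_, hnew⟩⟩
  have hmem := hT.1.mem_diagram_of_pos (p := (i, c)) (by omega)
  have hend := (isBalancedAt_iff_of_eq_sizeP h.isStrictPartition_stepShape hT.1 hmem
    (by rw [hc, sizeP_stepShape h.one_le h.le])).1 (hT.2 _ hmem)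
  rw [coe_stepShape_toNat (by omega), if_pos rfl, Int.toNat_natCast] at hend
  have hcol : c = newCol d lam i := by
    unfold newCol
    omega
  rw [newBox, ← hcol, hc]

theorem bijOn_FmapAux (hL : IsPaddingSeq d L lam) :
    Set.BijOn (FmapAux d L lam) {B | IsBalanced d lam B}
      {T ∈ {T | IsBalanced d (shapeAux L lam) T} | OccursAlong T L (sizeP d lam)} := by
  induction L generalizing lam with
  | nil =>
    have hset : {T ∈ {T | IsBalanced d (shapeAux [] lam) T} | OccursAlong T [] (sizeP d lam)} =
        {B | IsBalanced d lam B} :=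
      Set.sep_eq_self_iff_mem_true.2 fun T _ p hp => by simp at hp
    rw [hset]
    exact Set.bijOn_id _
  | cons i L ih =>
    obtain ⟨h, hL⟩ := hL
    have hsize := sizeP_stepShape (lam := lam) h.one_le h.le
    have htail := bijOn_sep (ih hL) (p := fun T => T (newBox d lam i) = sizeP d lam + 1)
      (q := fun T => OccursInRow T i (sizeP d lam + 1)) fun T hT => by
        rw [occursInRow_FmapAux_iff hL hT.1 (by omega) hsize.ge, h.occursInRow_iff hT]
    have hset : {T ∈ {T | IsBalanced d (shapeAux (i :: L) lam) T} |
          OccursAlong T (i :: L) (sizeP d lam)} =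
        {T ∈ {T ∈ {T | IsBalanced d (shapeAux L (stepShape lam i)) T} |
          OccursAlong T L (sizeP d (stepShape lam i))} | OccursInRow T i (sizeP d lam + 1)} := by
      ext T
      simp only [Set.mem_ofPred_eq, occursAlong_cons, hsize, shapeAux]
      tauto
    rw [hset]
    exact htail.comp h.bijOn_addBox

lemma shapeAux_apply (t : ℕ) : shapeAux L lam t = lam t + L.count t := by
  induction L generalizing lam with
  | nil => rfl
  | cons i L ih =>
    rw [shapeAux, ih, stepShape, List.count_cons]
    by_cases hit : t = i
    · rw [hit, if_pos rfl, if_pos (beq_self_eq_true i)]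
      ring
    · simp [hit, Ne.symm hit]

lemma isPaddingSeq_of_pairwise_le (hsorted : L.Pairwise (· ≤ ·)) (hL : ∀ i ∈ L, 1 ≤ i ∧ i ≤ d)
    (hlam : IsStrictPartition d lam)
    (hgap : ∀ t, 1 ≤ t → t < d → shapeAux L lam (t + 1) + 2 ≤ shapeAux L lam t) :
    IsPaddingSeq d L lam := by
  induction L generalizing lam with
  | nil => trivial
  | cons i L ih =>
    rw [List.pairwise_cons] at hsorted
    rw [List.forall_mem_cons] at hL
    have hrow : IsPaddableRow d lam i := by
      refine ⟨hlam, hL.1.1, hL.1.2, fun hi => ?_⟩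
      have habove : (i :: L).count (i - 1) = 0 := by
        rw [List.count_eq_zero, List.mem_cons]
        rintro (heq | hmem)
        · omega
        · have := hsorted.1 _ hmem
          omega
      have hcount : 0 < (i :: L).count i := List.count_pos_iff.2 List.mem_cons_self
      have := hgap (i - 1) (by omega) (by omega)
      rw [shapeAux_apply, shapeAux_apply, habove, Nat.sub_add_cancel hi.le] at this
      omega
    exact ⟨hrow, ih hsorted.2 hL.2 hrow.isStrictPartition_stepShape hgap⟩

end Padding

/-! ### The list `1^{m_1} 2^{m_2} ⋯ n^{m_n}` -/

section RowRuns

variable {m : ℕ → ℕ} {n : ℕ}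

/-- The list `1^{m 1} 2^{m 2} ⋯ n^{m n}`; `rowsList d r lam` is the case `m = μ`, `n = d`. -/
def rowRuns (m : ℕ → ℕ) (n : ℕ) : List ℕ :=
  (List.range n).flatMap fun k => List.replicate (m (k + 1)) (k + 1)

lemma rowRuns_succ : rowRuns m (n + 1) = rowRuns m n ++ List.replicate (m (n + 1)) (n + 1) := by
  simp [rowRuns, List.range_succ]

lemma mem_rowRuns {i : ℕ} (hi : i ∈ rowRuns m n) : 1 ≤ i ∧ i ≤ n := by
  simp only [rowRuns, List.mem_flatMap, List.mem_range, List.mem_replicate] at hi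
  omega

lemma length_rowRuns : (rowRuns m n).length = ∑ t ∈ Finset.Icc 1 n, m t := by
  induction n with
  | zero => rfl
  | succ n ih =>
    rw [rowRuns_succ, List.length_append, List.length_replicate, ih,
      Finset.sum_Icc_succ_top (Nat.le_add_left 1 n)]

lemma pairwise_le_rowRuns : (rowRuns m n).Pairwise (· ≤ ·) := by
  induction n with
  | zero => exact List.Pairwise.nil
  | succ n ih =>
    rw [rowRuns_succ, List.pairwise_append]
    refine ⟨ih, by simp [List.pairwise_replicate], fun a ha b hb => ?_⟩
    rw [List.eq_of_mem_replicate hb]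
    exact (mem_rowRuns ha).2.trans n.le_succ

lemma count_rowRuns {t : ℕ} (ht : 1 ≤ t) (htn : t ≤ n) : (rowRuns m n).count t = m t := by
  induction n with
  | zero => omega
  | succ n ih =>
    rw [rowRuns_succ, List.count_append, List.count_replicate]
    rcases htn.lt_or_eq with hlt | rfl
    · simp [ih (by omega), hlt.ne']
    · rw [List.count_eq_zero.2 fun hmem => by have := mem_rowRuns hmem; omega]
      simp

lemma mem_zipIdx_replicate {x l s i k : ℕ} :
    (i, k) ∈ (List.replicate l x).zipIdx s ↔ i = x ∧ s ≤ k ∧ k < s + l := by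
  rw [List.mk_mem_zipIdx_iff_le_and_getElem?_sub, List.getElem?_replicate]
  grind

lemma mem_zipIdx_rowRuns {s i k : ℕ} :
    (i, k) ∈ (rowRuns m n).zipIdx s ↔ (1 ≤ i ∧ i ≤ n) ∧
      s + ∑ t ∈ Finset.Icc 1 (i - 1), m t ≤ k ∧ k < s + ∑ t ∈ Finset.Icc 1 i, m t := by
  induction n with
  | zero =>
    simp only [rowRuns, List.range_zero, List.flatMap_nil, List.zipIdx_nil, List.not_mem_nil,
      false_iff]
    omega
  | succ n ih =>
    rw [rowRuns_succ, List.zipIdx_append, List.mem_append, ih, mem_zipIdx_replicate,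
      length_rowRuns]
    by_cases hi : i = n + 1
    · subst hi
      rw [Finset.sum_Icc_succ_top (Nat.le_add_left 1 n), Nat.add_sub_cancel]
      omega
    · omega

end RowRuns

/-! ### Padding to the trapezoid -/

section Trapezoid

variable {d r : ℕ} {lam : ℕ → ℕ}

lemma rowsList_eq_rowRuns : rowsList d r lam = rowRuns (muF d r lam) d := rfl

lemma shapeAux_rowsList {t : ℕ} (ht : 1 ≤ t) (htd : t ≤ d) (hsub : lam t ≤ Zlam d r t) :
    shapeAux (rowsList d r lam) lam t = Zlam d r t := by
  rw [shapeAux_apply, rowsList_eq_rowRuns, count_rowRuns ht htd]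
  exact Nat.add_sub_of_le hsub

lemma isPaddingSeq_rowsList (hlam : IsStrictPartition d lam)
    (hsub : ∀ t, 1 ≤ t → t ≤ d → lam t ≤ Zlam d r t) :
    IsPaddingSeq d (rowsList d r lam) lam := by
  refine isPaddingSeq_of_pairwise_le pairwise_le_rowRuns (fun i => mem_rowRuns) hlam
    fun t ht htd => ?_
  rw [shapeAux_rowsList (by omega) htd (hsub _ (by omega) htd),
    shapeAux_rowsList ht htd.le (hsub t ht htd.le), Zlam, Zlam]
  omega

lemma BSRestricted_eq :
    BSRestricted d r lam = {T ∈ {T | IsBalanced d (Zlam d r) T} |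
      OccursAlong T (rowsList d r lam) (sizeP d lam)} := by
  ext T
  refine and_congr_right fun hT => ?_
  simp only [OccursAlong, Prod.forall, rowsList_eq_rowRuns, mem_zipIdx_rowRuns, OccursInRow,
    sigmaF]
  constructor
  · rintro hocc i k ⟨⟨hi, hid⟩, hk, hk'⟩
    obtain ⟨c, -, hc⟩ := hocc i hi hid k (by omega) (by omega)
    exact ⟨c, hc⟩
  · intro hocc i hi hid k hk hk'
    obtain ⟨c, hc⟩ := hocc i k ⟨⟨hi, hid⟩, by omega, by omega⟩
    exact ⟨c, hT.1.mem_diagram_of_pos (by omega), hc⟩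

end Trapezoid

/-- the composition `F = (f_d)^{μ_d} ∘ ⋯ ∘ (f_1)^{μ_1}` of box-adding
maps is well defined (the final shape is `Z(d,r)`) and is a bijection from `BS(λ)`
onto `BS(Z(d,r))|_λ`. -/
theorem padding_bijection (d r : ℕ) (hd : 1 ≤ d)
    (lam : ℕ → ℕ) (hlam : IsStrictPartition d lam)
    (hsub : ∀ i : ℕ, 1 ≤ i → i ≤ d → lam i ≤ Zlam d r i) :
    (∀ i : ℕ, 1 ≤ i → i ≤ d → shapeAux (rowsList d r lam) lam i = Zlam d r i) ∧
      Set.BijOn (fun B => FmapAux d (rowsList d r lam) lam B)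
        {B : ℤ × ℤ → ℕ | IsBalanced d lam B} (BSRestricted d r lam) := by
  have hshape : ∀ i : ℕ, 1 ≤ i → i ≤ d → shapeAux (rowsList d r lam) lam i = Zlam d r i :=
    fun i hi hid => shapeAux_rowsList hi hid (hsub i hi hid)
  have hBS : {T | IsBalanced d (shapeAux (rowsList d r lam) lam) T} =
      {T | IsBalanced d (Zlam d r) T} :=
    Set.ext fun T => ⟨IsBalanced.congr hshape,
      IsBalanced.congr fun i hi hid => (hshape i hi hid).symm⟩
  refine ⟨hshape, ?_⟩
  rw [BSRestricted_eq, ← hBS]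
  exact bijOn_FmapAux (isPaddingSeq_rowsList hlam hsub)

end BST
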